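/- Let f : ℝ^d → ℝ be L-smooth and convex with minimizer x*, R₀ ≥ ‖x⁰ − x*‖, and 0 < γ ≤ 1/(4L). Let (F_k)_{k≥0} be a filtration and, for k = 0, …, K−1, let x^k be F_k-measurable, δ̂_k be nonnegative F_k-measurable, and ĝ^k, ḡ^k random vectors with conditional properties E[ḡ^k | F_k] = ∇f(x^k), E[‖ĝ^k − ḡ^k‖² | F_k] ≤ C·δ̂_k·σ², E[‖ĝ^k‖² | F_k] ≤ 2C·δ̂_k·σ² + 2‖∇f(x^k)‖² + 2σ²/N, and x^{k+1} = x^k − γ·ĝ^k. Suppose also: (i) 2γ²σ²K/N ≤ R₀²/3, (ii) 2√2·γ·√C·σ·R₀·∑_{k=0}^{K−1}√(E[δ̂_k]) ≤ R₀²/3, and (iii) 2γ²·C·σ²·∑_{k=0}^{K−1}E[δ̂_k] ≤ R₀²/3. Then E[f(x̄^K) − f(x*)] ≤ 2R₀²/(γK), where x̄^K = (1/K)·∑_{k=0}^{K−1} x^k. -/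

import Mathlib

open MeasureTheory ProbabilityTheory

noncomputable section

/-!
Expanding `‖xᵏ⁺¹ - x*‖²`, convexity and the unbiasedness of `ḡᵏ` produce the descent term
`-2γ E[f(xᵏ) - f(x*)]`; since `‖∇f‖² ≤ 2L (f - f(x*))`, the condition `γ ≤ 1/(4L)` lets half of it
absorb the second moment of `ĝᵏ`. What is left of the corruption is the cross term
`⟨xᵏ - x*, ĝᵏ - ḡᵏ⟩`, which is not centred, so that Cauchy-Schwarz bounds it only in terms of the
distance `√E‖xᵏ - x*‖²` itself. The recursion closes by a bootstrap: as long as the errors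
accumulated so far do not exceed `R₀²`, the iterates satisfy `E‖xᵏ - x*‖² ≤ 2R₀²`, and this is the
bound needed to control the next error. Telescoping and Jensen's inequality finish the proof.
-/

open AffineMap (lineMap lineMap_apply_zero lineMap_apply_one)
open scoped NNReal RealInnerProductSpace

section Gradient

variable {E : Type*} [NormedAddCommGroup E] [InnerProductSpace ℝ E] [CompleteSpace E]
  {f : E → ℝ} {L : ℝ≥0}

lemma hasDerivAt_comp_lineMap {g y z : E} {t : ℝ} (hg : HasGradientAt f g (lineMap y z t)) :
    HasDerivAt (fun s : ℝ ↦ f (lineMap y z s)) ⟪g, z - y⟫ t := by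
  simpa using! hg.hasFDerivAt.comp_hasDerivAt t AffineMap.hasDerivAt_lineMap

lemma add_inner_sub_le_of_convexOn {s : Set E} (hf : ConvexOn ℝ s f) {y z g : E}
    (hy : y ∈ s) (hz : z ∈ s) (hg : HasGradientAt f g y) :
    f y + ⟪g, z - y⟫ ≤ f z := by
  have hline : ConvexOn ℝ (lineMap y z ⁻¹' s) (fun t : ℝ ↦ f (lineMap y z t)) :=
    hf.comp_affineMap (lineMap y z)
  have hderiv : HasDerivAt (fun t : ℝ ↦ f (lineMap y z t)) ⟪g, z - y⟫ 0 :=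
    hasDerivAt_comp_lineMap (by simpa using hg)
  have hslope := hline.le_slope_of_hasDerivAt (by simpa using hy) (by simpa using hz)
    one_pos hderiv
  simp only [slope_def_field, lineMap_apply_zero, lineMap_apply_one, sub_zero, div_one] at hslope
  linarith

lemma abs_sub_sub_inner_gradient_le (hdiff : Differentiable ℝ f)
    (hlip : LipschitzWith L (gradient f)) (y z : E) :
    |f z - f y - ⟪gradient f y, z - y⟫| ≤ L / 2 * ‖z - y‖ ^ 2 := by
  set remainder : ℝ → ℝ := fun t ↦ f (lineMap y z t) - f y - t * ⟪gradient f y, z - y⟫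
  have hderiv (t : ℝ) : HasDerivAt remainder
      ⟪gradient f (lineMap y z t) - gradient f y, z - y⟫ t := by
    rw [inner_sub_left]
    simpa only [one_mul] using!
      ((hasDerivAt_comp_lineMap (y := y) (z := z) (hdiff _).hasGradientAt).sub_const (f y)).sub
        ((hasDerivAt_id t).mul_const ⟪gradient f y, z - y⟫)
  have hbound (t : ℝ) (ht : 0 ≤ t) :
      ‖⟪gradient f (lineMap y z t) - gradient f y, z - y⟫‖ ≤ L * ‖z - y‖ ^ 2 * t := calc
    _ ≤ ‖gradient f (lineMap y z t) - gradient f y‖ * ‖z - y‖ := norm_inner_le_norm _ _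
    _ ≤ L * ‖lineMap y z t - y‖ * ‖z - y‖ := by gcongr; exact hlip.norm_sub_le _ _
    _ = L * ‖z - y‖ ^ 2 * t := by
      rw [← dist_eq_norm, dist_lineMap_left, Real.norm_of_nonneg ht, dist_comm, dist_eq_norm]
      ring
  have hquadratic (t : ℝ) :
      HasDerivAt (fun t ↦ L / 2 * ‖z - y‖ ^ 2 * t ^ 2) (L * ‖z - y‖ ^ 2 * t) t := by
    refine ((hasDerivAt_pow 2 t).const_mul (L / 2 * ‖z - y‖ ^ 2)).congr_deriv ?_
    push_cast
    ring
  simpa [remainder] using image_norm_le_of_norm_deriv_right_le_deriv_boundary (a := 0) (b := 1)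
    (fun t _ ↦ (hderiv t).continuousAt.continuousWithinAt)
    (fun t _ ↦ (hderiv t).hasDerivWithinAt) (by simp [remainder]) hquadratic
    (fun t ht ↦ hbound t ht.1) (Set.right_mem_Icc.2 zero_le_one)

lemma norm_gradient_sq_le (hdiff : Differentiable ℝ f) (hlip : LipschitzWith L (gradient f))
    {c : ℝ} (hc : ∀ y, c ≤ f y) (y : E) :
    ‖gradient f y‖ ^ 2 ≤ 2 * L * (f y - c) := by
  -- Along `y - t ∇f y`, the gap `f - c ≥ 0` is dominated by a quadratic in `t`.
  have hquadratic (t : ℝ) : 0 ≤ L / 2 * ‖gradient f y‖ ^ 2 * (t * t)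
      + -‖gradient f y‖ ^ 2 * t + (f y - c) := by
    have hdescent := (abs_le.1 (abs_sub_sub_inner_gradient_le hdiff hlip y
      (y - t • gradient f y))).2
    rw [sub_sub_cancel_left, inner_neg_right, inner_smul_right, real_inner_self_eq_norm_sq,
      norm_neg, norm_smul, mul_pow, Real.norm_eq_abs, sq_abs] at hdescent
    linarith [hc (y - t • gradient f y)]
  have hdiscrim := discrim_le_zero hquadratic
  rw [discrim] at hdiscrim
  rcases (sq_nonneg ‖gradient f y‖).eq_or_lt with hzero | hpos
  · rw [← hzero]
    exact mul_nonneg (by positivity) (sub_nonneg.2 (hc y))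
  · refine le_of_mul_le_mul_left ?_ hpos
    linarith

end Gradient

section SquareIntegrable

variable {Ω E : Type*} {m m0 : MeasurableSpace Ω} {μ : Measure Ω} [NormedAddCommGroup E]

lemma memLp_comp_of_lipschitzWith {F : Type*} [NormedAddCommGroup F] [IsFiniteMeasure μ]
    {p : ENNReal} {g : E → F} {C : ℝ≥0} (hg : LipschitzWith C g) {X : Ω → E} (hX : MemLp X p μ) :
    MemLp (fun ω ↦ g (X ω)) p μ := by
  have hcentered : LipschitzWith C (fun y ↦ g y - g 0) := by
    simpa using hg.sub (LipschitzWith.const (g 0))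
  convert (hcentered.comp_memLp (sub_self _) hX).add (memLp_const (g 0)) using 1
  ext ω
  simp

variable [InnerProductSpace ℝ E]

lemma integrable_inner_of_memLp_two {u v : Ω → E} (hu : MemLp u 2 μ) (hv : MemLp v 2 μ) :
    Integrable (fun ω ↦ ⟪u ω, v ω⟫) μ :=
  (hu.norm.integrable_mul hv.norm).mono' (hu.1.inner hv.1)
    (ae_of_all _ fun ω ↦ norm_inner_le_norm (u ω) (v ω))

lemma abs_integral_inner_le {u v : Ω → E} (hu : MemLp u 2 μ) (hv : MemLp v 2 μ) :
    |∫ ω, ⟪u ω, v ω⟫ ∂μ| ≤ √(∫ ω, ‖u ω‖ ^ 2 ∂μ) * √(∫ ω, ‖v ω‖ ^ 2 ∂μ) := by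
  have hholder := integral_mul_norm_le_Lp_mul_Lq (μ := μ) Real.HolderConjugate.two_two
    (f := u) (g := v) (by simpa using hu) (by simpa using hv)
  simp only [Real.rpow_two, ← Real.sqrt_eq_rpow] at hholder
  calc |∫ ω, ⟪u ω, v ω⟫ ∂μ| ≤ ∫ ω, |⟪u ω, v ω⟫| ∂μ := abs_integral_le_integral_abs
    _ ≤ ∫ ω, ‖u ω‖ * ‖v ω‖ ∂μ :=
      integral_mono (integrable_inner_of_memLp_two hu hv).abs (hu.norm.integrable_mul hv.norm)
        fun ω ↦ abs_real_inner_le_norm (u ω) (v ω)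
    _ ≤ _ := hholder

lemma integral_norm_sub_smul_sq {u v : Ω → E} (hu : MemLp u 2 μ) (hv : MemLp v 2 μ) (γ : ℝ) :
    ∫ ω, ‖u ω - γ • v ω‖ ^ 2 ∂μ
      = ∫ ω, ‖u ω‖ ^ 2 ∂μ - 2 * γ * ∫ ω, ⟪u ω, v ω⟫ ∂μ + γ ^ 2 * ∫ ω, ‖v ω‖ ^ 2 ∂μ := by
  have hinner := (integrable_inner_of_memLp_two hu hv).const_mul (2 * γ)
  have husq := hu.integrable_norm_pow two_ne_zero
  have hsub : Integrable (fun ω ↦ ‖u ω‖ ^ 2 - 2 * γ * ⟪u ω, v ω⟫) μ := husq.sub hinner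
  have hvsq := (hv.integrable_norm_pow two_ne_zero).const_mul (γ ^ 2)
  rw [← integral_const_mul, ← integral_const_mul, ← integral_sub husq hinner,
    ← integral_add hsub hvsq]
  congr 1 with ω
  simp only [norm_sub_sq_real, inner_smul_right, norm_smul, mul_pow, Real.norm_eq_abs, sq_abs]
  ring

lemma integral_inner_condExp [CompleteSpace E] (hm : m ≤ m0) [SigmaFinite (μ.trim hm)]
    {u v : Ω → E} (hu : StronglyMeasurable[m] u) (huv : Integrable (fun ω ↦ ⟪u ω, v ω⟫) μ)
    (hv : Integrable v μ) :
    ∫ ω, ⟪u ω, (μ[v | m]) ω⟫ ∂μ = ∫ ω, ⟪u ω, v ω⟫ ∂μ :=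
  (integral_congr_ae (condExp_bilin_of_stronglyMeasurable_left (innerSL ℝ) hu huv hv)).symm.trans
    (integral_condExp hm)

lemma integral_le_of_condExp_le (hm : m ≤ m0) [SigmaFinite (μ.trim hm)] {X Y : Ω → ℝ}
    (hY : Integrable Y μ) (hXY : μ[X | m] ≤ᵐ[μ] Y) : ∫ ω, X ω ∂μ ≤ ∫ ω, Y ω ∂μ :=
  (integral_condExp hm).symm.trans_le (integral_mono_ae integrable_condExp hY hXY)

lemma integral_le_add_of_condExp_le_add [IsProbabilityMeasure μ] (hm : m ≤ m0)
    {X Y Z : Ω → ℝ} {a b c : ℝ} (hY : Integrable Y μ) (hZ : Integrable Z μ)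
    (hX : ∀ᵐ ω ∂μ, (μ[X | m]) ω ≤ a * Y ω + b * Z ω + c) :
    ∫ ω, X ω ∂μ ≤ a * ∫ ω, Y ω ∂μ + b * ∫ ω, Z ω ∂μ + c := by
  have hYZ : Integrable (fun ω ↦ a * Y ω + b * Z ω) μ := (hY.const_mul a).add (hZ.const_mul b)
  calc ∫ ω, X ω ∂μ ≤ ∫ ω, (a * Y ω + b * Z ω + c) ∂μ :=
      integral_le_of_condExp_le hm (hYZ.add (integrable_const _)) hX
    _ = a * ∫ ω, Y ω ∂μ + b * ∫ ω, Z ω ∂μ + c := by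
      rw [integral_add hYZ (integrable_const _),
        integral_add (hY.const_mul a) (hZ.const_mul b), integral_const_mul, integral_const_mul]
      simp

end SquareIntegrable

lemma integral_map_average_le {Ω E ι : Type*} {m0 : MeasurableSpace Ω} {μ : Measure Ω}
    [AddCommGroup E] [Module ℝ E] {f : E → ℝ} (hf : ConvexOn ℝ Set.univ f)
    {s : Finset ι} (hs : s.Nonempty) {X : ι → Ω → E}
    (hint : ∀ i ∈ s, Integrable (fun ω ↦ f (X i ω)) μ)
    (havg : Integrable (fun ω ↦ f ((s.card : ℝ)⁻¹ • ∑ i ∈ s, X i ω)) μ) :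
    ∫ ω, f ((s.card : ℝ)⁻¹ • ∑ i ∈ s, X i ω) ∂μ
      ≤ (s.card : ℝ)⁻¹ * ∑ i ∈ s, ∫ ω, f (X i ω) ∂μ := by
  rw [← integral_finsetSum s hint, ← integral_const_mul]
  refine integral_mono havg ((integrable_finsetSum s hint).const_mul _) fun ω ↦ ?_
  have hjensen := hf.map_sum_le (t := s) (w := fun _ ↦ (s.card : ℝ)⁻¹) (p := fun i ↦ X i ω)
    (fun _ _ ↦ by positivity) (by simp [hs.card_ne_zero]) (fun _ _ ↦ Set.mem_univ _)
  simpa only [Finset.smul_sum, Finset.mul_sum, smul_eq_mul] using hjensen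

section SmoothExpectation

variable {Ω E : Type*} {m m0 : MeasurableSpace Ω} {P : Measure Ω} [IsProbabilityMeasure P]
  [NormedAddCommGroup E] [InnerProductSpace ℝ E] [CompleteSpace E] {f : E → ℝ} {L : ℝ≥0}
  {X g h : Ω → E}

lemma integrable_comp_of_lipschitzWith_gradient (hdiff : Differentiable ℝ f)
    (hlip : LipschitzWith L (gradient f)) (hX : MemLp X 2 P) :
    Integrable (fun ω ↦ f (X ω)) P := by
  have hlinear : Integrable (fun ω ↦ f 0 + ⟪gradient f 0, X ω⟫) P :=
    (integrable_const _).add (integrable_inner_of_memLp_two (memLp_const _) hX)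
  have hremainder : Integrable (fun ω ↦ f (X ω) - (f 0 + ⟪gradient f 0, X ω⟫)) P := by
    refine ((hX.integrable_norm_pow two_ne_zero).const_mul (L / 2 : ℝ)).mono'
      ((hdiff.continuous.comp_aestronglyMeasurable hX.1).sub hlinear.1) (ae_of_all _ fun ω ↦ ?_)
    simpa [← sub_sub] using abs_sub_sub_inner_gradient_le hdiff hlip 0 (X ω)
  simpa [Pi.add_def] using hremainder.add hlinear

lemma integral_norm_gradient_sq_le (hdiff : Differentiable ℝ f)
    (hlip : LipschitzWith L (gradient f)) {c : ℝ} (hc : ∀ y, c ≤ f y) (hX : MemLp X 2 P) :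
    ∫ ω, ‖gradient f (X ω)‖ ^ 2 ∂P ≤ 2 * L * (∫ ω, f (X ω) ∂P - c) := by
  have hfX := integrable_comp_of_lipschitzWith_gradient hdiff hlip hX
  calc ∫ ω, ‖gradient f (X ω)‖ ^ 2 ∂P ≤ ∫ ω, 2 * L * (f (X ω) - c) ∂P :=
      integral_mono ((memLp_comp_of_lipschitzWith hlip hX).integrable_norm_pow two_ne_zero)
        ((hfX.sub (integrable_const c)).const_mul _)
        fun ω ↦ norm_gradient_sq_le hdiff hlip hc (X ω)
    _ = 2 * L * (∫ ω, f (X ω) ∂P - c) := by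
      rw [integral_const_mul, integral_sub hfX (integrable_const c)]
      simp

lemma integral_sub_le_integral_inner (hm : m ≤ m0) (hdiff : Differentiable ℝ f)
    (hlip : LipschitzWith L (gradient f)) (hconv : ConvexOn ℝ Set.univ f)
    (hXmeas : StronglyMeasurable[m] X) (hX : MemLp X 2 P) (hh : MemLp h 2 P)
    (hmean : P[h | m] =ᵐ[P] fun ω ↦ gradient f (X ω)) (z : E) :
    ∫ ω, f (X ω) ∂P - f z ≤ ∫ ω, ⟪X ω - z, h ω⟫ ∂P := by
  have hfX := integrable_comp_of_lipschitzWith_gradient hdiff hlip hX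
  have hXz : MemLp (fun ω ↦ X ω - z) 2 P := hX.sub (memLp_const z)
  have hconvex (ω : Ω) : f (X ω) - f z ≤ ⟪X ω - z, gradient f (X ω)⟫ := by
    have htangent := add_inner_sub_le_of_convexOn hconv (Set.mem_univ (X ω)) (Set.mem_univ z)
      (hdiff (X ω)).hasGradientAt
    rw [← neg_sub, inner_neg_right, real_inner_comm] at htangent
    linarith
  calc ∫ ω, f (X ω) ∂P - f z = ∫ ω, (f (X ω) - f z) ∂P := by
        rw [integral_sub hfX (integrable_const _)]
        simp
    _ ≤ ∫ ω, ⟪X ω - z, gradient f (X ω)⟫ ∂P :=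
      integral_mono (hfX.sub (integrable_const _))
        (integrable_inner_of_memLp_two hXz (memLp_comp_of_lipschitzWith hlip hX)) hconvex
    _ = ∫ ω, ⟪X ω - z, (P[h | m]) ω⟫ ∂P := by
      refine integral_congr_ae ?_
      filter_upwards [hmean] with ω hω
      rw [hω]
    _ = ∫ ω, ⟪X ω - z, h ω⟫ ∂P :=
      integral_inner_condExp hm (hXmeas.sub stronglyMeasurable_const)
        (integrable_inner_of_memLp_two hXz hh) (hh.integrable one_le_two)

lemma le_integral_comp_of_forall_le (hdiff : Differentiable ℝ f)
    (hlip : LipschitzWith L (gradient f)) {c : ℝ} (hc : ∀ y, c ≤ f y) (hX : MemLp X 2 P) :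
    c ≤ ∫ ω, f (X ω) ∂P := by
  simpa using integral_mono (integrable_const c)
    (integrable_comp_of_lipschitzWith_gradient hdiff hlip hX) fun ω ↦ hc (X ω)

lemma integral_norm_sgd_step_sq_add_le (hm : m ≤ m0) (hdiff : Differentiable ℝ f)
    (hlip : LipschitzWith L (gradient f)) (hconv : ConvexOn ℝ Set.univ f)
    {xstar : E} (hmin : ∀ y, f xstar ≤ f y)
    {γ D ν : ℝ} (hγ : 0 ≤ γ) (hγL : 4 * L * γ ≤ 1)
    (hXmeas : StronglyMeasurable[m] X) (hX : MemLp X 2 P) (hg : MemLp g 2 P) (hh : MemLp h 2 P)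
    (hmean : P[h | m] =ᵐ[P] fun ω ↦ gradient f (X ω))
    (hdev : ∫ ω, ‖g ω - h ω‖ ^ 2 ∂P ≤ D)
    (hsec : ∫ ω, ‖g ω‖ ^ 2 ∂P ≤ 2 * D + 2 * ∫ ω, ‖gradient f (X ω)‖ ^ 2 ∂P + 2 * ν) :
    ∫ ω, ‖X ω - γ • g ω - xstar‖ ^ 2 ∂P + γ * (∫ ω, f (X ω) ∂P - f xstar)
      ≤ ∫ ω, ‖X ω - xstar‖ ^ 2 ∂P + √(∫ ω, ‖X ω - xstar‖ ^ 2 ∂P) * (2 * γ * √D)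
        + 2 * γ ^ 2 * (D + ν) := by
  set gap := ∫ ω, f (X ω) ∂P - f xstar
  set distSq := ∫ ω, ‖X ω - xstar‖ ^ 2 ∂P
  have hu : MemLp (fun ω ↦ X ω - xstar) 2 P := hX.sub (memLp_const xstar)
  have hexpand : ∫ ω, ‖X ω - γ • g ω - xstar‖ ^ 2 ∂P = distSq
      - 2 * γ * ∫ ω, ⟪X ω - xstar, g ω⟫ ∂P + γ ^ 2 * ∫ ω, ‖g ω‖ ^ 2 ∂P := by
    simp_rw [sub_right_comm _ (γ • g _) xstar]
    exact integral_norm_sub_smul_sq hu hg γ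
  have hdescent : gap - √distSq * √D ≤ ∫ ω, ⟪X ω - xstar, g ω⟫ ∂P := by
    have hsplit : ∫ ω, ⟪X ω - xstar, g ω⟫ ∂P
        = ∫ ω, ⟪X ω - xstar, h ω⟫ ∂P + ∫ ω, ⟪X ω - xstar, g ω - h ω⟫ ∂P := by
      rw [← integral_add (integrable_inner_of_memLp_two hu hh)
        (integrable_inner_of_memLp_two (v := fun ω ↦ g ω - h ω) hu (hg.sub hh))]
      simp only [← inner_add_right, add_sub_cancel]
    have hunbiased := integral_sub_le_integral_inner hm hdiff hlip hconv hXmeas hX hh hmean xstar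
    have hcorruption : |∫ ω, ⟪X ω - xstar, g ω - h ω⟫ ∂P| ≤ √distSq * √D :=
      (abs_integral_inner_le hu (hg.sub hh)).trans
        (mul_le_mul_of_nonneg_left (Real.sqrt_le_sqrt hdev) (Real.sqrt_nonneg _))
    linarith [neg_abs_le (∫ ω, ⟪X ω - xstar, g ω - h ω⟫ ∂P)]
  have hmoment : ∫ ω, ‖g ω‖ ^ 2 ∂P ≤ 2 * D + 4 * L * gap + 2 * ν := by
    linarith [integral_norm_gradient_sq_le hdiff hlip hmin hX]
  have hstepsize : 4 * L * γ * (γ * gap) ≤ γ * gap :=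
    mul_le_of_le_one_left
      (mul_nonneg hγ (sub_nonneg.2 (le_integral_comp_of_forall_le hdiff hlip hmin hX))) hγL
  linarith [mul_le_mul_of_nonneg_left hdescent (mul_nonneg zero_le_two hγ),
    mul_le_mul_of_nonneg_left hmoment (sq_nonneg γ)]

lemma integral_average_sub_le {ι : Type*} (hdiff : Differentiable ℝ f)
    (hlip : LipschitzWith L (gradient f)) (hconv : ConvexOn ℝ Set.univ f)
    {s : Finset ι} (hs : s.Nonempty) {X : ι → Ω → E} (hX : ∀ i ∈ s, MemLp (X i) 2 P) (c : ℝ) :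
    ∫ ω, f ((s.card : ℝ)⁻¹ • ∑ i ∈ s, X i ω) ∂P - c
      ≤ (s.card : ℝ)⁻¹ * ∑ i ∈ s, (∫ ω, f (X i ω) ∂P - c) := by
  have hcard : (s.card : ℝ) ≠ 0 := Nat.cast_ne_zero.2 hs.card_ne_zero
  have hjensen := integral_map_average_le hconv hs
    (fun i hi ↦ integrable_comp_of_lipschitzWith_gradient hdiff hlip (hX i hi))
    (integrable_comp_of_lipschitzWith_gradient hdiff hlip
      ((memLp_finsetSum s hX).const_smul (s.card : ℝ)⁻¹))
  rw [Finset.sum_sub_distrib, Finset.sum_const, nsmul_eq_mul, mul_sub, inv_mul_cancel_left₀ hcard]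
  exact sub_le_sub_right hjensen c

end SmoothExpectation

lemma add_sum_le_two_mul_sq {a r b c : ℕ → ℝ} {R : ℝ} {K : ℕ} (hR : 0 ≤ R)
    (ha : a 0 ≤ R ^ 2) (hr : ∀ k < K, 0 ≤ r k) (hb : ∀ k < K, 0 ≤ b k) (hc : ∀ k < K, 0 ≤ c k)
    (hstep : ∀ k < K, a (k + 1) + r k ≤ a k + √(a k) * b k + c k)
    (hsum : ∑ k ∈ Finset.range K, (√2 * R * b k + c k) ≤ R ^ 2) :
    a K + ∑ k ∈ Finset.range K, r k ≤ 2 * R ^ 2 := by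
  have hpartial (T : ℕ) (hT : T ≤ K) :
      ∑ k ∈ Finset.range T, (√2 * R * b k + c k) ≤ R ^ 2 := by
    refine (Finset.sum_le_sum_of_subset_of_nonneg (Finset.range_mono hT) fun k hk _ ↦ ?_).trans
      hsum
    have hk' := Finset.mem_range.1 hk
    exact add_nonneg (mul_nonneg (by positivity) (hb k hk')) (hc k hk')
  suffices htelescope : ∀ T ≤ K, a T + ∑ k ∈ Finset.range T, r k
      ≤ R ^ 2 + ∑ k ∈ Finset.range T, (√2 * R * b k + c k) by
    linarith [htelescope K le_rfl]
  intro T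
  induction T with
  | zero => simpa using ha
  | succ T ih =>
    intro hT
    have hbounded : a T ≤ 2 * R ^ 2 := by
      have hrsum : 0 ≤ ∑ k ∈ Finset.range T, r k :=
        Finset.sum_nonneg fun k hk ↦ hr k ((Finset.mem_range.1 hk).trans hT)
      linarith [ih (by omega), hpartial T (by omega)]
    have hsqrt : √(a T) ≤ √2 * R := by
      simpa [hR] using Real.sqrt_le_sqrt hbounded
    rw [Finset.sum_range_succ, Finset.sum_range_succ]
    linarith [ih (by omega), hstep T hT, mul_le_mul_of_nonneg_right hsqrt (hb T hT)]

lemma memLp_sgd_iterate {Ω E : Type*} {m0 : MeasurableSpace Ω} {μ : Measure Ω}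
    [NormedAddCommGroup E] [NormedSpace ℝ E] {x g : ℕ → Ω → E} {γ : ℝ} {p : ENNReal} {K : ℕ}
    (hx0 : MemLp (x 0) p μ) (hg : ∀ k < K, MemLp (g k) p μ)
    (hupd : ∀ k < K, ∀ ω, x (k + 1) ω = x k ω - γ • g k ω) {k : ℕ} (hk : k ≤ K) :
    MemLp (x k) p μ := by
  induction k with
  | zero => exact hx0
  | succ k ih =>
    rw [funext (hupd k hk)]
    exact (ih (by omega)).sub ((hg k hk).const_smul γ)

theorem btard_sgd_convex_convergence_general
    {Ω E : Type*} {m0 : MeasurableSpace Ω} {P : Measure Ω} [IsProbabilityMeasure P]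
    [NormedAddCommGroup E] [InnerProductSpace ℝ E] [CompleteSpace E]
    (ℱ : Filtration ℕ m0) {f : E → ℝ} {L : ℝ≥0} (hdiff : Differentiable ℝ f)
    (hlip : LipschitzWith L (gradient f)) (hconv : ConvexOn ℝ Set.univ f)
    {xstar : E} (hmin : ∀ y, f xstar ≤ f y) {K : ℕ} (hK : 0 < K)
    {γ ν R₀ : ℝ} (hγ : 0 < γ) (hγL : 4 * L * γ ≤ 1) (hν : 0 ≤ ν) (hR₀ : 0 ≤ R₀)
    {x ghat gbar : ℕ → Ω → E} {D : ℕ → ℝ}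
    (hx0 : MemLp (x 0) 2 P) (hx0R₀ : ∫ ω, ‖x 0 ω - xstar‖ ^ 2 ∂P ≤ R₀ ^ 2)
    (hxmeas : ∀ k < K, StronglyMeasurable[ℱ k] (x k))
    (hghat : ∀ k < K, MemLp (ghat k) 2 P) (hgbar : ∀ k < K, MemLp (gbar k) 2 P)
    (hmean : ∀ k < K, P[gbar k | ℱ k] =ᵐ[P] fun ω ↦ gradient f (x k ω))
    (hdev : ∀ k < K, ∫ ω, ‖ghat k ω - gbar k ω‖ ^ 2 ∂P ≤ D k)
    (hsec : ∀ k < K, ∫ ω, ‖ghat k ω‖ ^ 2 ∂P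
      ≤ 2 * D k + 2 * ∫ ω, ‖gradient f (x k ω)‖ ^ 2 ∂P + 2 * ν)
    (hupd : ∀ k < K, ∀ ω, x (k + 1) ω = x k ω - γ • ghat k ω)
    (hcond : 2 * √2 * γ * R₀ * ∑ k ∈ Finset.range K, √(D k)
      + 2 * γ ^ 2 * ∑ k ∈ Finset.range K, D k + 2 * γ ^ 2 * ν * K ≤ R₀ ^ 2) :
    ∫ ω, f ((K : ℝ)⁻¹ • ∑ k ∈ Finset.range K, x k ω) ∂P - f xstar ≤ 2 * R₀ ^ 2 / (γ * K) := by
  have hx (k : ℕ) (hk : k < K) : MemLp (x k) 2 P := memLp_sgd_iterate hx0 hghat hupd hk.le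
  have hrecursion : ∫ ω, ‖x K ω - xstar‖ ^ 2 ∂P
      + ∑ k ∈ Finset.range K, γ * (∫ ω, f (x k ω) ∂P - f xstar) ≤ 2 * R₀ ^ 2 := by
    refine add_sum_le_two_mul_sq (a := fun k ↦ ∫ ω, ‖x k ω - xstar‖ ^ 2 ∂P)
      (b := fun k ↦ 2 * γ * √(D k)) (c := fun k ↦ 2 * γ ^ 2 * (D k + ν)) hR₀ hx0R₀
      (fun k hk ↦ mul_nonneg hγ.le
        (sub_nonneg.2 (le_integral_comp_of_forall_le hdiff hlip hmin (hx k hk))))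
      (fun k _ ↦ by positivity) (fun k hk ↦ ?_) (fun k hk ↦ ?_) ?_
    · have hD : 0 ≤ D k := (integral_nonneg fun ω ↦ by positivity).trans (hdev k hk)
      positivity
    · simp_rw [hupd k hk]
      exact integral_norm_sgd_step_sq_add_le (ℱ.le k) hdiff hlip hconv hmin hγ.le hγL
        (hxmeas k hk) (hx k hk) (hghat k hk) (hgbar k hk) (hmean k hk) (hdev k hk) (hsec k hk)
    · simp only [Finset.sum_add_distrib, ← Finset.mul_sum, Finset.sum_const, Finset.card_range,
        nsmul_eq_mul]
      linarith
  have hdist : 0 ≤ ∫ ω, ‖x K ω - xstar‖ ^ 2 ∂P := integral_nonneg fun ω ↦ by positivity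
  calc ∫ ω, f ((K : ℝ)⁻¹ • ∑ k ∈ Finset.range K, x k ω) ∂P - f xstar
      ≤ (K : ℝ)⁻¹ * ∑ k ∈ Finset.range K, (∫ ω, f (x k ω) ∂P - f xstar) := by
        simpa using integral_average_sub_le hdiff hlip hconv (Finset.nonempty_range_iff.2 hK.ne')
          (fun k hk ↦ hx k (Finset.mem_range.1 hk)) (f xstar)
    _ = (∑ k ∈ Finset.range K, γ * (∫ ω, f (x k ω) ∂P - f xstar)) / (γ * K) := by
        rw [← Finset.mul_sum, mul_div_mul_left _ _ hγ.ne', inv_mul_eq_div]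
    _ ≤ 2 * R₀ ^ 2 / (γ * K) := by
        gcongr
        linarith

/-- Convex convergence guarantee for BTARD-SGD: under the per-step
conditional bounds and the three stepsize conditions encoding the paper's stepsize choice,
the averaged iterate satisfies `E[f(x̄^K) − f(x*)] ≤ 2R₀²/(γK)`. -/
theorem btard_sgd_convex_convergence
    {Ω : Type*} {m0 : MeasurableSpace Ω} (P : Measure Ω) [IsProbabilityMeasure P]
    (ℱ : Filtration ℕ m0) {d : ℕ}
    (f : EuclideanSpace ℝ (Fin d) → ℝ) (L : ℝ) (hL : 0 < L)
    (hdiff : Differentiable ℝ f)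
    (hsmooth : ∀ y z, ‖gradient f y - gradient f z‖ ≤ L * ‖y - z‖)
    (hconv : ConvexOn ℝ Set.univ f)
    (xstar : EuclideanSpace ℝ (Fin d)) (hmin : ∀ y, f xstar ≤ f y)
    (K N : ℕ) (hK : 0 < K) (hN : 1 ≤ N)
    (γ C σ R₀ : ℝ) (hγ : 0 < γ) (hγL : γ ≤ 1 / (4 * L)) (hC : 0 ≤ C) (hσ : 0 ≤ σ)
    (x0 : EuclideanSpace ℝ (Fin d)) (hR₀ : ‖x0 - xstar‖ ≤ R₀)
    (x ghat gbar : ℕ → Ω → EuclideanSpace ℝ (Fin d)) (δhat : ℕ → Ω → ℝ)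
    (hx0 : x 0 = fun _ => x0)
    (hxmeas : ∀ k < K, StronglyMeasurable[ℱ k] (x k))
    (hδmeas : ∀ k < K, StronglyMeasurable[ℱ k] (δhat k))
    (hδnonneg : ∀ k < K, ∀ ω, 0 ≤ δhat k ω)
    (hδint : ∀ k < K, Integrable (δhat k) P)
    (hgbarint : ∀ k < K, Integrable (gbar k) P)
    (hghatint : ∀ k < K, Integrable (ghat k) P)
    (hdevint : ∀ k < K, Integrable (fun ω => ‖ghat k ω - gbar k ω‖ ^ 2) P)
    (hsecint : ∀ k < K, Integrable (fun ω => ‖ghat k ω‖ ^ 2) P)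
    (hfint : ∀ k < K, Integrable (fun ω => f (x k ω)) P)
    (hgradint : ∀ k < K, Integrable (fun ω => ‖gradient f (x k ω)‖ ^ 2) P)
    (hmean : ∀ k < K, P[gbar k|ℱ k] =ᵐ[P] fun ω => gradient f (x k ω))
    (hdev : ∀ k < K, ∀ᵐ ω ∂P,
      (P[fun ω' => ‖ghat k ω' - gbar k ω'‖ ^ 2|ℱ k]) ω ≤ C * δhat k ω * σ ^ 2)
    (hsec : ∀ k < K, ∀ᵐ ω ∂P,
      (P[fun ω' => ‖ghat k ω'‖ ^ 2|ℱ k]) ω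
        ≤ 2 * C * δhat k ω * σ ^ 2 + 2 * ‖gradient f (x k ω)‖ ^ 2 + 2 * σ ^ 2 / N)
    (hupd : ∀ k < K, ∀ ω, x (k + 1) ω = x k ω - γ • ghat k ω)
    (hcond1 : 2 * γ ^ 2 * σ ^ 2 * K / N ≤ R₀ ^ 2 / 3)
    (hcond2 : 2 * Real.sqrt 2 * γ * Real.sqrt C * σ * R₀ *
        ∑ k ∈ Finset.range K, Real.sqrt (∫ ω, δhat k ω ∂P) ≤ R₀ ^ 2 / 3)
    (hcond3 : 2 * γ ^ 2 * C * σ ^ 2 *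
        ∑ k ∈ Finset.range K, (∫ ω, δhat k ω ∂P) ≤ R₀ ^ 2 / 3) :
    (∫ ω, f ((K : ℝ)⁻¹ • ∑ k ∈ Finset.range K, x k ω) ∂P) - f xstar
      ≤ 2 * R₀ ^ 2 / (γ * K) := by
  lift L to ℝ≥0 using hL.le
  have hlip : LipschitzWith L (gradient f) :=
    .of_dist_le_mul fun y z ↦ by simpa only [dist_eq_norm] using hsmooth y z
  have hstepsize : 4 * L * γ ≤ 1 := by
    rwa [mul_comm, ← le_div_iff₀ (by positivity)]
  have hghat (k : ℕ) (hk : k < K) : MemLp (ghat k) 2 P :=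
    (memLp_two_iff_integrable_sq_norm (hghatint k hk).1).2 (hsecint k hk)
  have hgbar (k : ℕ) (hk : k < K) : MemLp (gbar k) 2 P := by
    simpa using (hghat k hk).sub ((memLp_two_iff_integrable_sq_norm
      ((hghatint k hk).sub (hgbarint k hk)).1).2 (hdevint k hk))
  have hbound (k : ℕ) (hk : k < K) : Integrable (fun ω ↦ C * δhat k ω * σ ^ 2) P :=
    ((hδint k hk).const_mul C).mul_const _
  refine btard_sgd_convex_convergence_general ℱ hdiff hlip hconv hmin hK hγ hstepsize
    (ν := σ ^ 2 / N) (by positivity) ((norm_nonneg _).trans hR₀) (hx0 ▸ memLp_const x0)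
    (by simpa [hx0] using by gcongr) hxmeas hghat hgbar hmean
    (fun k hk ↦ integral_le_of_condExp_le (ℱ.le k) (hbound k hk) (hdev k hk))
    (fun k hk ↦ integral_le_add_of_condExp_le_add (ℱ.le k) (hbound k hk) (hgradint k hk)
      ((hsec k hk).mono fun ω hω ↦ hω.trans_eq (by ring))) hupd ?_
  simp_rw [integral_mul_const, integral_const_mul, Real.sqrt_mul' _ (sq_nonneg σ),
    Real.sqrt_sq hσ, Real.sqrt_mul hC, ← Finset.sum_mul, ← Finset.mul_sum]
  rw [show 2 * γ ^ 2 * (σ ^ 2 / N) * K = 2 * γ ^ 2 * σ ^ 2 * K / N by ring]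
  linarith
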